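/- arXiv:1103.4740 — 4 statements merged into one kernel-verified Lean document; each statement's English description precedes it below -/
import Mathlib

section
/- Let K be a cubic number field (a number field of degree 3 over ℚ). Then every two times monogenic order in K is of type I. -/
open NumberField

/-- An order in a number field `K`: a subring of the ring of integers `𝓞 K`
whose quotient field equals `K`. -/
def IsOrder (K : Type*) [Field K] [NumberField K] (O : Subring (𝓞 K)) : Prop :=
  ∀ x : K, ∃ a ∈ O, ∃ b ∈ O, b ≠ 0 ∧
    x = algebraMap (𝓞 K) K a / algebraMap (𝓞 K) K b

/-- Two elements `α, β` of `𝓞 K` are ℤ-equivalent if `β = u * α + a` for some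
`u ∈ {1, -1}` and `a ∈ ℤ`. -/
def ZEquiv (K : Type*) [Field K] [NumberField K] (α β : 𝓞 K) : Prop :=
  ∃ u a : ℤ, (u = 1 ∨ u = -1) ∧ β = (u : 𝓞 K) * α + (a : 𝓞 K)

/-- An order `O` is `k` times monogenic if there are at least `k` pairwise
ℤ-inequivalent elements `α ∈ O` with `ℤ[α] = O`. -/
def TimesMonogenic (K : Type*) [Field K] [NumberField K] (k : ℕ) (O : Subring (𝓞 K)) : Prop :=
  ∃ f : Fin k → 𝓞 K, (∀ i j, i ≠ j → ¬ ZEquiv K (f i) (f j)) ∧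
    ∀ i, Subring.closure {f i} = O

/-- An order `O` in a number field `K` of degree at least 3 is of type I if there are
`α, β ∈ O` and a matrix `(a1 a2; a3 a4) ∈ GL(2, ℤ)` such that `K = ℚ(α)`,
`O = ℤ[α] = ℤ[β]`, `β = (a1·α + a2)/(a3·α + a4)` and `a3 ≠ 0`. -/
def IsTypeI (K : Type*) [Field K] [NumberField K] (O : Subring (𝓞 K)) : Prop :=
  ∃ α β : 𝓞 K, α ∈ O ∧ β ∈ O ∧ ∃ M : Matrix (Fin 2) (Fin 2) ℤ, IsUnit M.det ∧
    Algebra.adjoin ℚ {algebraMap (𝓞 K) K α} = ⊤ ∧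
    Subring.closure {α} = O ∧ Subring.closure {β} = O ∧
    M 1 0 ≠ 0 ∧
    (M 1 0 : K) * algebraMap (𝓞 K) K α + (M 1 1 : K) ≠ 0 ∧
    algebraMap (𝓞 K) K β =
      ((M 0 0 : K) * algebraMap (𝓞 K) K α + (M 0 1 : K)) /
      ((M 1 0 : K) * algebraMap (𝓞 K) K α + (M 1 1 : K))

lemma adjoin_top_of_order (K : Type*) [Field K] [NumberField K] (O : Subring (𝓞 K))
    (hO : IsOrder K O) (α : 𝓞 K) (hα : Subring.closure {α} = O) :
    IntermediateField.adjoin ℚ {algebraMap (𝓞 K) K α} = ⊤ := by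
  have hmem : ∀ a ∈ O, algebraMap (𝓞 K) K a ∈
      IntermediateField.adjoin ℚ {algebraMap (𝓞 K) K α} := by
    intro a ha
    rw [← hα] at ha
    have hle : Subring.closure {α} ≤
        (IntermediateField.adjoin ℚ {algebraMap (𝓞 K) K α}).toSubfield.toSubring.comap
          (algebraMap (𝓞 K) K) := by
      rw [Subring.closure_le]
      rintro x rfl
      exact IntermediateField.mem_adjoin_simple_self ℚ (algebraMap (𝓞 K) K x)
    exact hle ha
  rw [eq_top_iff]
  intro x _
  obtain ⟨a, ha, b, hb, -, rfl⟩ := hO x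
  exact div_mem (hmem a ha) (hmem b hb)

lemma natDegree_minpoly_three (K : Type*) [Field K] [NumberField K]
    (hd : Module.finrank ℚ K = 3) (α : 𝓞 K)
    (h : IntermediateField.adjoin ℚ {algebraMap (𝓞 K) K α} = ⊤) :
    (minpoly ℤ α).natDegree = 3 := by
  have hint : IsIntegral ℤ α := NumberField.RingOfIntegers.isIntegral α
  have h1 : minpoly ℚ (algebraMap (𝓞 K) K α) = (minpoly ℤ α).map (algebraMap ℤ ℚ) :=
    minpoly.isIntegrallyClosed_eq_field_fractions ℚ K hint
  have h2 := (Field.primitive_element_iff_minpoly_natDegree_eq ℚ (algebraMap (𝓞 K) K α)).1 h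
  rw [h1, (minpoly.monic hint).natDegree_map, hd] at h2
  exact h2

lemma comb_zero (K : Type*) [Field K] [NumberField K] (α : 𝓞 K)
    (h3 : (minpoly ℤ α).natDegree = 3) (x y z : ℤ)
    (h : (x : 𝓞 K) + y * α + z * α ^ 2 = 0) : x = 0 ∧ y = 0 ∧ z = 0 := by
  have hint : IsIntegral ℤ α := NumberField.RingOfIntegers.isIntegral α
  set Q : Polynomial ℤ := Polynomial.C z * Polynomial.X ^ 2 + Polynomial.C y * Polynomial.X +
    Polynomial.C x with hQ
  have hQ0 : Polynomial.aeval α Q = 0 := by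
    simp [hQ]
    linear_combination h
  have hdvd := minpoly.isIntegrallyClosed_dvd hint hQ0
  have hdeg : Q.natDegree ≤ 2 := Polynomial.natDegree_quadratic_le
  have hz : Q = 0 := by
    by_contra hne
    have := Polynomial.natDegree_le_of_dvd hdvd hne
    omega
  have c0 : Q.coeff 0 = 0 := by rw [hz]; simp
  have c1 : Q.coeff 1 = 0 := by rw [hz]; simp
  have c2 : Q.coeff 2 = 0 := by rw [hz]; simp
  rw [hQ] at c0 c1 c2
  simp [-eq_intCast, -Int.cast_id, Polynomial.coeff_X, Polynomial.coeff_C,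
    Polynomial.coeff_X_pow] at c0 c1 c2
  exact ⟨c0, c1, c2⟩

lemma comb_exists (K : Type*) [Field K] [NumberField K] (α : 𝓞 K)
    (h3 : (minpoly ℤ α).natDegree = 3) (b : 𝓞 K) (hb : b ∈ Subring.closure {α}) :
    ∃ x y z : ℤ, b = (x : 𝓞 K) + y * α + z * α ^ 2 := by
  have hint : IsIntegral ℤ α := NumberField.RingOfIntegers.isIntegral α
  have hle : Subring.closure {α} ≤ (Polynomial.aeval (R := ℤ) α).toRingHom.range := by
    rw [Subring.closure_le]
    rintro x rfl
    exact ⟨Polynomial.X, by simp⟩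
  obtain ⟨P, hP⟩ := hle hb
  have hm := minpoly.monic hint
  have hmod : Polynomial.aeval α (P %ₘ minpoly ℤ α) = b := by
    rw [Polynomial.aeval_modByMonic_eq_self_of_root (minpoly.aeval ℤ α)]
    exact hP
  have hlt : (P %ₘ minpoly ℤ α).natDegree < 3 := by
    rw [← h3]
    apply Polynomial.natDegree_modByMonic_lt _ hm
    intro h1
    rw [h1] at h3
    simp at h3
  rw [Polynomial.aeval_eq_sum_range' hlt] at hmod
  refine ⟨(P %ₘ minpoly ℤ α).coeff 0, (P %ₘ minpoly ℤ α).coeff 1, (P %ₘ minpoly ℤ α).coeff 2, ?_⟩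
  rw [← hmod]
  simp only [Finset.sum_range_succ, Finset.sum_range_zero, zsmul_eq_mul, pow_zero, pow_one,
    mul_one, zero_add]

lemma cube_exists (K : Type*) [Field K] [NumberField K] (α : 𝓞 K)
    (h3 : (minpoly ℤ α).natDegree = 3) :
    ∃ r q p : ℤ, α ^ 3 = (r : 𝓞 K) + q * α + p * α ^ 2 :=
  comb_exists K α h3 _ (pow_mem (Subring.subset_closure (Set.mem_singleton _)) 3)

/-- Let `K` be a cubic number field. Then every two times monogenic order in `K`
is of type I. -/
theorem cubic_two_times_monogenic_is_typeI (K : Type*) [Field K] [NumberField K]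
    (hd : Module.finrank ℚ K = 3) (O : Subring (𝓞 K))
    (hO : IsOrder K O) (h2 : TimesMonogenic K 2 O) : IsTypeI K O := by
  obtain ⟨f, hne, hgen⟩ := h2
  have hα := hgen 0
  have hβ := hgen 1
  have hnz := hne 0 1 (by decide)
  generalize f 0 = α at *
  generalize f 1 = β at *
  have htop := adjoin_top_of_order K O hO α hα
  have h3 := natDegree_minpoly_three K hd α htop
  have h3' := natDegree_minpoly_three K hd β (adjoin_top_of_order K O hO β hβ)
  have hαO : α ∈ O := hα ▸ Subring.subset_closure (Set.mem_singleton _)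
  have hβO : β ∈ O := hβ ▸ Subring.subset_closure (Set.mem_singleton _)
  obtain ⟨r, q, p, hcube⟩ := cube_exists K α h3
  obtain ⟨a, b, c, hb⟩ := comb_exists K α h3 β (hα ▸ hβO)
  obtain ⟨e, k, g, h1⟩ := comb_exists K β h3' α (hβ ▸ hαO)
  obtain ⟨e', k', g', h2⟩ := comb_exists K β h3' (α ^ 2) (hβ ▸ pow_mem hαO 2)
  -- coordinates of the square of `β`
  obtain ⟨w, u, v, hu, hv, hsq⟩ : ∃ w u v : ℤ,
      u = 2 * a * b + 2 * b * c * q + c ^ 2 * (p * q + r) ∧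
      v = b ^ 2 + 2 * a * c + 2 * b * c * p + c ^ 2 * (p ^ 2 + q) ∧
      β ^ 2 = (w : 𝓞 K) + u * α + v * α ^ 2 := by
    refine ⟨a ^ 2 + 2 * b * c * r + c ^ 2 * p * r, _, _, rfl, rfl, ?_⟩
    rw [hb]
    push_cast
    linear_combination (2 * (b : 𝓞 K) * c + c ^ 2 * α + c ^ 2 * p) * hcube
  have e1 := comb_zero K α h3 (e + k * a + g * w) (k * b + g * u - 1) (k * c + g * v) (by
    rw [hsq, hb] at h1
    push_cast
    linear_combination -h1)
  have e2 := comb_zero K α h3 (e' + k' * a + g' * w) (k' * b + g' * u) (k' * c + g' * v - 1) (by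
    rw [hsq, hb] at h2
    push_cast
    linear_combination -h2)
  obtain ⟨-, e11, e12⟩ := e1
  obtain ⟨-, e21, e22⟩ := e2
  have hunit : IsUnit (b * v - c * u) := by
    refine IsUnit.of_mul_eq_one (k * g' - g * k') ?_
    have e11' : k * b + g * u = 1 := by linarith
    have e22' : k' * c + g' * v = 1 := by linarith
    have : (b * v - c * u) * (k * g' - g * k') =
      (k * b + g * u) * (k' * c + g' * v) - (k * c + g * v) * (k' * b + g' * u) := by ring
    rw [this, e11', e22', e12, e21]
    norm_num
  have hc : c ≠ 0 := by
    rintro rfl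
    have hbu : IsUnit b := by
      have := isUnit_of_mul_isUnit_left (x := b) (y := v) (by simpa using hunit)
      exact this
    refine hnz ⟨b, a, Int.isUnit_iff.1 hbu, ?_⟩
    rw [hb]
    push_cast
    ring
  have hden : (c : 𝓞 K) * α + ((-c * p - b : ℤ) : 𝓞 K) ≠ 0 := by
    intro h
    have := comb_zero K α h3 (-c * p - b) c 0 (by
      push_cast at h ⊢
      linear_combination h)
    exact hc this.2.1
  have hmul : β * ((c : 𝓞 K) * α + ((-c * p - b : ℤ) : 𝓞 K)) =
      ((c ^ 2 * q + b * (-c * p - b) + a * c : ℤ) : 𝓞 K) * α +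
        ((c ^ 2 * r + a * (-c * p - b) : ℤ) : 𝓞 K) := by
    rw [hb]
    push_cast
    linear_combination (c : 𝓞 K) ^ 2 * hcube
  have hdenK : algebraMap (𝓞 K) K ((c : 𝓞 K) * α + ((-c * p - b : ℤ) : 𝓞 K)) ≠ 0 := by
    intro h
    exact hden ((FaithfulSMul.algebraMap_injective (𝓞 K) K) (h.trans (map_zero _).symm))
  have hmulK := congrArg (algebraMap (𝓞 K) K) hmul
  simp only [map_add, map_mul, map_intCast] at hdenK hmulK
  refine ⟨α, β, hαO, hβO, !![c ^ 2 * q + b * (-c * p - b) + a * c,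
    c ^ 2 * r + a * (-c * p - b); c, -c * p - b], ?_, ?_, hα, hβ, ?_, ?_, ?_⟩
  · rw [Matrix.det_fin_two_of]
    convert hunit using 1
    rw [hu, hv]
    ring
  · rw [← IntermediateField.adjoin_simple_toSubalgebra_of_isAlgebraic
      (IsAlgebraic.of_finite ℚ (algebraMap (𝓞 K) K α)), htop]
    rfl
  · simpa using hc
  · exact hdenK
  · exact (eq_div_iff hdenK).2 hmulK
end

section
/- Let A be a domain with quotient field L of characteristic 0 which is integrally closed in L and finitely generated over ℤ as a ℤ-algebra, let G be a finite extension of L, and let A_G be the integral closure of A in G. Then the group A_G* of units (invertible elements) of A_G is finitely generated. -/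
theorem fg_of_map_of_inf_ker {M N : Type*} [CommGroup M] [CommGroup N] (U : Subgroup M)
    (f : M →* N) (h1 : (U.map f).FG) (h2 : (U ⊓ f.ker).FG) : U.FG := by
  rw [Subgroup.fg_iff_add_fg] at h1 h2 ⊢
  have h := Submodule.fg_of_fg_map_of_fg_inf_ker
    (MonoidHom.toAdditive f).toIntLinearMap (s := AddSubgroup.toIntSubmodule (Subgroup.toAddSubgroup U))
  rw [Submodule.fg_iff_addSubgroup_fg, Submodule.fg_iff_addSubgroup_fg,
    Submodule.fg_iff_addSubgroup_fg] at h
  exact h h1 h2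

theorem subgroup_fg_of_le {M : Type*} [CommGroup M] {U V : Subgroup M} (hV : V.FG)
    (h : U ≤ V) : U.FG := by
  have : Group.FG V := (Group.fg_iff_subgroup_fg V).2 hV
  have : Module.Finite ℤ (Additive V) := Module.Finite.iff_addGroup_fg.2 inferInstance
  have hn : IsNoetherian ℤ (Additive V) := inferInstance
  have h3 := hn.noetherian (AddSubgroup.toIntSubmodule (Subgroup.toAddSubgroup (U.subgroupOf V)))
  rw [Submodule.fg_iff_addSubgroup_fg] at h3
  have h4 : (U.subgroupOf V).FG := (Subgroup.fg_iff_add_fg _).2 h3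
  have h6 : Group.FG (U.subgroupOf V) := (Group.fg_iff_subgroup_fg _).2 h4
  rw [← Group.fg_iff_subgroup_fg]
  exact Group.fg_of_surjective (f := (Subgroup.subgroupOfEquivOfLe h).toMonoidHom)
    (Subgroup.subgroupOfEquivOfLe h).surjective

/-- every group of units inside a f.g. subring is f.g. -/
def UFG (F : Type*) [Field F] : Prop :=
  ∀ (s : Finset F) (U : Subgroup Fˣ), (∀ u ∈ U, (u : F) ∈ Subring.closure (s : Set F)) → U.FG

universe u

def Good (K : Type u) [Field K] : Prop :=
  ∀ (L : Type u) [Field L] [Algebra K L] [FiniteDimensional K L], UFG L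

open IsDedekindDomain in
theorem dedekind_red (R F : Type*) [CommRing R] [IsDedekindDomain R] [Field F] [Algebra R F]
    [IsFractionRing R F] (s : Finset F) (U : Subgroup Fˣ)
    (hU : ∀ u ∈ U, (u : F) ∈ Subring.closure (s : Set F)) :
    ∃ U' ≤ U, (∀ u ∈ U', (u : F) ∈ (algebraMap R F).range) ∧ (U'.FG → U.FG) := by
  classical
  let S : Set (HeightOneSpectrum R) := ⋃ a ∈ s, {v | 1 < v.valuation F a}
  have hS : S.Finite := by
    refine Set.Finite.biUnion s.finite_toSet fun a _ => ?_
    exact HeightOneSpectrum.Support.finite R a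
  have : Finite S := hS
  let Φ : Fˣ →* (S → (WithZero (Multiplicative ℤ))ˣ) :=
    MonoidHom.pi fun v => Units.map (v.1.valuation F : F →* WithZero (Multiplicative ℤ))
  have hle : ∀ v ∉ S, ∀ u ∈ Subring.closure (s : Set F), v.valuation F u ≤ 1 := by
    intro v hv u hu
    have : Subring.closure (s : Set F) ≤ (v.valuation F).integer := by
      rw [Subring.closure_le]
      intro a ha
      by_contra hlt
      have hlt' : 1 < v.valuation F a := not_le.1 hlt
      exact hv (Set.mem_biUnion ha hlt')
    exact this hu
  have hFG : Group.FG (WithZero (Multiplicative ℤ))ˣ :=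
    Group.fg_of_surjective (f := (WithZero.unitsWithZeroEquiv (α := Multiplicative ℤ)).symm.toMonoidHom)
      (WithZero.unitsWithZeroEquiv (α := Multiplicative ℤ)).symm.surjective
  have hFG2 : Group.FG (S → (WithZero (Multiplicative ℤ))ˣ) := inferInstance
  have key : ∀ u ∈ U ⊓ Φ.ker, (u : F) ∈ (algebraMap R F).range := by
    rintro u ⟨huU, huk⟩
    apply HeightOneSpectrum.mem_integers_of_valuation_le_one
    intro v
    by_cases hv : v ∈ S
    · have := congrArg Units.val (congrFun (MonoidHom.mem_ker.1 huk) ⟨v, hv⟩)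
      exact le_of_eq this
    · exact hle v hv _ (hU u huU)
  exact ⟨U ⊓ Φ.ker, inf_le_left, key, fun hV =>
    fg_of_map_of_inf_ker U Φ (subgroup_fg_of_le (Group.fg_def.1 hFG2) le_top) hV⟩

theorem ufg_numberField (K : Type*) [Field K] [NumberField K] : UFG K := by
  intro s U hU
  have h : Group.FG (NumberField.RingOfIntegers K)ˣ := Group.fg_iff_monoid_fg.2 inferInstance
  obtain ⟨U', -, h1, h2⟩ := dedekind_red (NumberField.RingOfIntegers K) K s U hU
  apply h2
  refine subgroup_fg_of_le (V :=
    (Units.map (algebraMap (NumberField.RingOfIntegers K) K).toMonoidHom).range)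
    ((Group.fg_iff_subgroup_fg _).1 inferInstance) ?_
  intro u hu
  obtain ⟨a, ha⟩ := h1 u hu
  obtain ⟨b, hb⟩ := h1 u⁻¹ (inv_mem hu)
  have hab : a * b = 1 := by
    apply FaithfulSMul.algebraMap_injective (NumberField.RingOfIntegers K) K
    rw [map_mul, ha, hb]; simp
  refine ⟨⟨a, b, hab, by rw [mul_comm, hab]⟩, ?_⟩
  ext
  exact ha

theorem good_special (K F : Type u) [Field K] [Field F] [Algebra K F] (hK : Good K)
    (s : Finset F) (U : Subgroup Fˣ) (hU : ∀ u ∈ U, (u : F) ∈ Subring.closure (s : Set F))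
    (hint : ∀ u ∈ U, IsIntegral K (u : F)) : U.FG := by
  classical
  let C := Algebra.adjoin K (s : Set F)
  have hsC : Subring.closure (s : Set F) ≤ C.toSubring := by
    rw [Subring.closure_le]; exact Algebra.subset_adjoin
  have hft : Algebra.FiniteType K C := Algebra.FiniteType.adjoin_of_finite s.finite_toSet
  obtain ⟨m, hm⟩ := Ideal.exists_maximal C
  let := Ideal.Quotient.field m
  have hfin : Module.Finite K (C ⧸ m) := finite_of_finite_type_of_isJacobsonRing K (C ⧸ m)
  let π : C →+* C ⧸ m := Ideal.Quotient.mk m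
  let g : U →* Cˣ :=
    { toFun := fun u => ⟨⟨(u.1 : F), hsC (hU _ u.2)⟩, ⟨(↑(u.1⁻¹) : F), hsC (hU _ (inv_mem u.2))⟩,
        Subtype.ext (by simp), Subtype.ext (by simp)⟩
      map_one' := by ext; simp
      map_mul' := by intro a b; ext; simp }
  let f : U →* (C ⧸ m)ˣ := (Units.map (π : C →* C ⧸ m)).comp g
  let s' : Finset (C ⧸ m) := s.attach.image fun a => π ⟨a.1, Algebra.subset_adjoin a.2⟩
  have hs' : Subring.closure (s : Set F) ≤
      ((Subring.closure (s' : Set (C ⧸ m))).comap π).map (C.val : C →+* F) := by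
    rw [Subring.closure_le]
    intro a ha
    refine ⟨⟨a, Algebra.subset_adjoin ha⟩, Subring.subset_closure ?_, rfl⟩
    simp only [s', Finset.coe_image]
    exact ⟨⟨a, ha⟩, by simp, rfl⟩
  have hrange : f.range.FG := by
    refine hK (C ⧸ m) s' _ ?_
    rintro _ ⟨u, rfl⟩
    obtain ⟨c, hc, hcu⟩ := hs' (hU _ u.2)
    have : c = ⟨(u.1 : F), hsC (hU _ u.2)⟩ := Subtype.ext hcu
    subst this
    exact hc
  have hinj : f.ker = ⊥ := by
    rw [eq_bot_iff]
    intro u hu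
    have h1 : π ⟨(u.1 : F), hsC (hU _ u.2)⟩ = 1 := congrArg Units.val (MonoidHom.mem_ker.1 hu)
    by_contra hne
    set c : C := ⟨(u.1 : F), hsC (hU _ u.2)⟩ with hc
    have hc0 : c - 1 ≠ 0 := by
      intro h0
      apply hne
      have h2 : ((c - 1 : C) : F) = 0 := by rw [h0]; rfl
      have h3 : (u.1 : F) = 1 := sub_eq_zero.1 h2
      rw [Subgroup.mem_bot]
      exact Subtype.ext (Units.ext h3)
    have hci : IsIntegral K (c - 1) := by
      have : IsIntegral K c := by
        have := hint _ u.2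
        exact (isIntegral_algHom_iff C.val Subtype.val_injective).1 this
      exact this.sub isIntegral_one
    have hunit : IsUnit (c - 1) := by
      exact hci.isUnit hc0
    have hmem : c - 1 ∈ m := by
      rw [← Ideal.Quotient.eq_zero_iff_mem]
      change π (c - 1) = 0
      rw [map_sub, h1, map_one, sub_self]
    exact hm.ne_top (Ideal.eq_top_of_isUnit_mem m hmem hunit)
  rw [← Group.fg_iff_subgroup_fg]
  rw [Group.fg_def]
  refine fg_of_map_of_inf_ker ⊤ f ?_ ?_
  · rwa [← MonoidHom.range_eq_map]
  · rw [hinj, inf_bot_eq]; exact Subgroup.FG.bot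

open scoped IntermediateField.algebraAdjoinAdjoin in
theorem function_red (K F : Type*) [Field K] [Field F] [CharZero F] [Algebra K F]
    (E : IntermediateField K F) (x : F) (hE : E = IntermediateField.adjoin K {x})
    [FiniteDimensional E F] (s : Finset F) (U : Subgroup Fˣ)
    (hU : ∀ u ∈ U, (u : F) ∈ Subring.closure (s : Set F)) :
    ∃ U' ≤ U, (∀ u ∈ U', ∀ i, ((minpoly E (u : F)).coeff i : F) ∈ Algebra.adjoin K {x}) ∧
      (U'.FG → U.FG) := by
  subst hE
  let R := Algebra.adjoin K {x}
  let E := IntermediateField.adjoin K {x}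
  have hpid : IsPrincipalIdealRing R := by
    have hr := Algebra.adjoin_singleton_eq_range_aeval K x
    have : IsPrincipalIdealRing (Polynomial.aeval (R := K) x).range :=
      IsPrincipalIdealRing.of_surjective (Polynomial.aeval (R := K) x).rangeRestrict
        (AlgHom.rangeRestrict_surjective _)
    change IsPrincipalIdealRing (Algebra.adjoin K {x})
    rw [hr]; exact this
  have hcz : CharZero E := ((algebraMap E F).charZero_iff (algebraMap E F).injective).2 inferInstance
  have hfr : IsFractionRing R E := inferInstance
  have htow : IsScalarTower R E F := inferInstance
  have hsep : Algebra.IsSeparable E F := inferInstance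
  have hfd : FiniteDimensional E F := inferInstance
  have hded : IsDedekindDomain (integralClosure R F) := integralClosure.isDedekindDomain R E F
  have hfr2 : IsFractionRing (integralClosure R F) F :=
    integralClosure.isFractionRing_of_finite_extension E F
  obtain ⟨U', h0, h1, h2⟩ := dedekind_red (integralClosure R F) F s U hU
  refine ⟨U', h0, fun u hu i => ?_, h2⟩
  obtain ⟨a, ha⟩ := h1 u hu
  have hai : IsIntegral R (u : F) := by rw [← ha]; exact a.2
  rw [minpoly.isIntegrallyClosed_eq_field_fractions' E hai, Polynomial.coeff_map]
  exact ((minpoly R (u : F)).coeff i).2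

theorem const_of_mem (K F : Type*) [Field K] [Field F] [Algebra K F] (x : F)
    (hx : Transcendental K x) (y : F) (h1 : y ∈ Algebra.adjoin K {x})
    (h2 : y ∈ Algebra.adjoin K {x⁻¹}) : y ∈ (algebraMap K F).range := by
  have hx0 : x ≠ 0 := by
    rintro rfl
    exact hx isAlgebraic_zero
  rw [Algebra.adjoin_singleton_eq_range_aeval] at h1 h2
  obtain ⟨p, hp⟩ := h1
  obtain ⟨q, hq⟩ := h2
  let := invertibleOfNonzero (inv_ne_zero hx0)
  have h3 := Polynomial.eval₂_reverse_mul_pow (algebraMap K F) x⁻¹ q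
  have h4 : Polynomial.aeval x (q.reverse) = Polynomial.aeval x (p * Polynomial.X ^ q.natDegree) := by
    have hq' : Polynomial.eval₂ (algebraMap K F) x⁻¹ q = y := hq
    have hp' : Polynomial.aeval x p = y := hp
    rw [hq', invOf_eq_inv, inv_inv] at h3
    rw [map_mul, hp', ← h3, map_pow, Polynomial.aeval_X, mul_assoc, ← mul_pow,
      inv_mul_cancel₀ hx0, one_pow, mul_one]
    rfl
  have h5 := (transcendental_iff_injective.1 hx) h4
  have h6 : p.natDegree = 0 := by
    rcases eq_or_ne p 0 with rfl | hp0
    · simp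
    have := Polynomial.reverse_natDegree_le q
    rw [h5, Polynomial.natDegree_mul_X_pow _ hp0] at this
    omega
  rw [Polynomial.eq_C_of_natDegree_eq_zero h6] at hp
  exact ⟨p.coeff 0, by rw [← hp]; simp⟩

theorem ufg_trans (K F : Type u) [Field K] [Field F] [CharZero F] [Algebra K F] (hK : Good K)
    (x : F) (hx : Transcendental K x) (E : IntermediateField K F)
    (hE0 : E = IntermediateField.adjoin K {x}) [FiniteDimensional E F] :
    UFG F := by
  intro s U hU
  have hE : E = IntermediateField.adjoin K {x⁻¹} := by
    rw [hE0]
    apply le_antisymm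
    · rw [IntermediateField.adjoin_simple_le_iff]
      have := inv_mem (IntermediateField.mem_adjoin_simple_self K x⁻¹)
      rwa [inv_inv] at this
    · rw [IntermediateField.adjoin_simple_le_iff]
      exact inv_mem (IntermediateField.mem_adjoin_simple_self K x)
  obtain ⟨U₁, hle1, hP1, hF1⟩ := function_red K F E x hE0 s U hU
  obtain ⟨U₂, hle2, hP2, hF2⟩ := function_red K F E x⁻¹ hE s U₁ fun u hu => hU u (hle1 hu)
  refine hF1 (hF2 (good_special K F hK s U₂ (fun u hu => hU u (hle1 (hle2 hu))) ?_))
  · intro u hu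
    have h1 := hP1 u (hle2 hu)
    have h2 := hP2 u hu
    have hc : ∀ i, ∃ k : K, algebraMap K F k = ((minpoly E (u : F)).coeff i : F) := fun i =>
      const_of_mem K F x hx _ (h1 i) (h2 i)
    have hl : minpoly E (u : F) ∈ Polynomial.lifts (algebraMap K E) := by
      rw [Polynomial.lifts_iff_coeff_lifts]
      intro i
      obtain ⟨k, hk⟩ := hc i
      exact ⟨k, Subtype.ext hk⟩
    have hui : IsIntegral E (u : F) := Algebra.IsIntegral.isIntegral _
    obtain ⟨q, hq, -, hqm⟩ := Polynomial.lifts_and_natDegree_eq_and_monic hl (minpoly.monic hui)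
    refine ⟨q, hqm, ?_⟩
    have := minpoly.aeval E (u : F)
    rw [← hq, Polynomial.aeval_map_algebraMap] at this
    exact this

theorem good_adjoin (K Ω : Type u) [Field K] [Field Ω] [CharZero Ω] [Algebra K Ω] (hK : Good K)
    (x : Ω) : Good (IntermediateField.adjoin K {x}) := by
  intro L _ _ _
  let M := IntermediateField.adjoin K {x}
  let : Algebra K L := ((algebraMap M L).comp (algebraMap K M)).toAlgebra
  have htow : IsScalarTower K M L := IsScalarTower.of_algebraMap_eq fun _ => rfl
  by_cases hx : IsAlgebraic K x
  · have : FiniteDimensional K M := IntermediateField.adjoin.finiteDimensional hx.isIntegral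
    have : FiniteDimensional K L := FiniteDimensional.trans K M L
    exact hK L
  · have hczM : CharZero M := ((algebraMap M Ω).charZero_iff (algebraMap M Ω).injective).2 inferInstance
    have hczL : CharZero L := ((algebraMap M L).charZero_iff (algebraMap M L).injective).1 hczM
    let f : M →ₐ[K] L := IsScalarTower.toAlgHom K M L
    let x' : M := IntermediateField.AdjoinSimple.gen K x
    have hx' : Transcendental K x' := by
      intro h
      exact hx (h.algebraMap (A := Ω))
    have hfx : Transcendental K (f x') := by
      intro h
      exact hx' ((isAlgebraic_algHom_iff f f.injective).1 h)
    have hE : f.fieldRange = IntermediateField.adjoin K {f x'} := by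
      have h1 : (⊤ : IntermediateField K M) = IntermediateField.adjoin K {x'} := by
        apply IntermediateField.map_injective M.val
        rw [IntermediateField.adjoin_map, Set.image_singleton, ← AlgHom.fieldRange_eq_map,
          IntermediateField.fieldRange_val]
        rfl
      rw [AlgHom.fieldRange_eq_map, h1, IntermediateField.adjoin_map, Set.image_singleton]
    have hfd : FiniteDimensional f.fieldRange L :=
      Module.Finite.of_equiv_equiv (A₁ := M) (B₁ := L) (AlgEquiv.ofInjectiveField f).toRingEquiv
        (RingEquiv.refl L) (by ext; rfl)
    exact ufg_trans K L hK (f x') hfx f.fieldRange hE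

theorem good_bot (G : Type u) [Field G] [CharZero G] : Good (⊥ : IntermediateField ℚ G) := by
  intro L _ _ _
  have hczL : CharZero L := ((algebraMap (⊥ : IntermediateField ℚ G) L).charZero_iff
    (algebraMap (⊥ : IntermediateField ℚ G) L).injective).1 inferInstance
  have : FiniteDimensional ℚ L := FiniteDimensional.trans ℚ (⊥ : IntermediateField ℚ G) L
  have : NumberField L := { }
  exact ufg_numberField L

theorem good_fg (G : Type u) [Field G] [CharZero G] (s : Finset G) :
    Good (IntermediateField.adjoin ℚ (s : Set G)) :=
  IntermediateField.induction_on_adjoin_finset s (fun K => Good K) (good_bot G)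
    fun K x _ hK => good_adjoin K G hK x

theorem ufg_all (G : Type u) [Field G] [CharZero G] : UFG G := by
  classical
  intro s U hU
  let E := IntermediateField.adjoin ℚ (s : Set G)
  have hE : UFG E := good_fg G s E
  let f : E →+* G := algebraMap E G
  let s' : Finset E := s.attach.image fun a => ⟨a.1, IntermediateField.subset_adjoin ℚ _ a.2⟩
  have hs' : Subring.closure (s : Set G) ≤ (Subring.closure (s' : Set E)).map f := by
    rw [Subring.closure_le]
    intro a ha
    refine ⟨⟨a, IntermediateField.subset_adjoin ℚ _ ha⟩, Subring.subset_closure ?_, rfl⟩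
    simp only [s', Finset.coe_image]
    exact ⟨⟨a, ha⟩, by simp, rfl⟩
  have hU' : (U.comap (Units.map f.toMonoidHom)).FG := by
    refine hE s' _ fun u hu => ?_
    obtain ⟨c, hc, hcu⟩ := hs' (hU _ hu)
    have : c = (u : E) := f.injective hcu
    exact this ▸ hc
  have : Group.FG (U.comap (Units.map f.toMonoidHom)) := (Group.fg_iff_subgroup_fg _).2 hU'
  have h2 : ((Units.map f.toMonoidHom).comp (U.comap (Units.map f.toMonoidHom)).subtype).range.FG :=
    (Group.fg_iff_subgroup_fg _).1 inferInstance
  refine subgroup_fg_of_le h2 fun u hu => ?_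
  obtain ⟨c, -, hcu⟩ := hs' (hU _ hu)
  have hc0 : c ≠ 0 := by
    rintro rfl
    exact u.ne_zero (by rw [← hcu, map_zero])
  have hu' : Units.map f.toMonoidHom (Units.mk0 c hc0) = u := Units.ext hcu
  exact ⟨⟨Units.mk0 c hc0, by rw [Subgroup.mem_comap, hu']; exact hu⟩, hu'⟩

/-- Let `A` be a domain with quotient field `L` of characteristic 0 which is integrally
closed in `L` and finitely generated over ℤ as a ℤ-algebra, let `G` be a finite
extension of `L`, and let `A_G` be the integral closure of `A` in `G`. Then the group
`A_G*` of units of `A_G` is finitely generated. -/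
theorem units_of_integral_closure_fg
    (A : Type*) [CommRing A] [IsDomain A] [IsIntegrallyClosed A] [Algebra.FiniteType ℤ A]
    (L : Type*) [Field L] [CharZero L] [Algebra A L] [IsFractionRing A L]
    (G : Type*) [Field G] [Algebra L G] [FiniteDimensional L G]
    [Algebra A G] [IsScalarTower A L G] :
    Group.FG (↥(integralClosure A G))ˣ := by
  classical
  have hczG : CharZero G := ((algebraMap L G).charZero_iff (algebraMap L G).injective).1 inferInstance
  have hnoeth : IsNoetherianRing A := Algebra.FiniteType.isNoetherianRing ℤ A
  have hfin : Module.Finite A (integralClosure A G) := IsIntegralClosure.finite A L G _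
  have hft : Algebra.FiniteType ℤ (integralClosure A G) :=
    Algebra.FiniteType.trans (S := A) inferInstance inferInstance
  obtain ⟨s, hs⟩ := hft.out
  let B := integralClosure A G
  let f : B →+* G := algebraMap B G
  have hf : Function.Injective f := Subtype.val_injective
  let φ : Bˣ →* Gˣ := Units.map f.toMonoidHom
  have hφ : Function.Injective φ := Units.map_injective hf
  have hcl : Subring.closure (s : Set B) = ⊤ := by
    rw [eq_top_iff]
    intro b _
    have hb : b ∈ Algebra.adjoin ℤ (s : Set B) := by rw [hs]; trivial
    rw [Algebra.adjoin_int] at hb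
    exact hb
  have hr : φ.range.FG := by
    refine ufg_all G (s.image f) _ ?_
    rintro _ ⟨u, rfl⟩
    have h : (Subring.closure (s : Set B)).map f = Subring.closure ((s.image f : Finset G) : Set G) := by
      rw [RingHom.map_closure, Finset.coe_image]
    rw [← h, hcl]
    exact ⟨u, trivial, rfl⟩
  have : Group.FG φ.range := (Group.fg_iff_subgroup_fg _).2 hr
  exact Group.fg_of_surjective (f := (MonoidHom.ofInjective hφ).symm.toMonoidHom)
    (MonoidHom.ofInjective hφ).symm.surjective
end

section
/- Let A be an integrally closed domain with quotient field L of characteristic 0 which is finitely generated over ℤ as a ℤ-algebra, and K a finite extension of L of degree at least 3. Let α, β ∈ A_K (the integral closure of A in K) satisfy L(α) = L(β) = K, A[α] = A[β], and suppose α and β are L-equivalent. Then α and β are A-equivalent. -/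
/-- Two elements `α, β` of `K` are `L`-equivalent if `β = u·α + a` for some `u ∈ L*`
and `a ∈ L`. -/
def LEquiv (L K : Type*) [Field L] [Field K] [Algebra L K] (α β : K) : Prop :=
  ∃ u a : L, u ≠ 0 ∧ β = algebraMap L K u * α + algebraMap L K a

/-- Two elements `α, β` of the integral closure of `A` in `K` are `A`-equivalent if
`β = u·α + a` for some unit `u ∈ Aˣ` and some `a ∈ A`. -/
def AEquiv (A K : Type*) [CommRing A] [CommRing K] [Algebra A K] (α β : K) : Prop :=
  ∃ (u : Aˣ) (a : A), β = algebraMap A K u * α + algebraMap A K a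

open Polynomial in
lemma coeffs_mem_aux
    (A : Type*) [CommRing A] [IsDomain A] [IsIntegrallyClosed A]
    (L : Type*) [Field L] [Algebra A L] [IsFractionRing A L]
    (K : Type*) [Field K] [Algebra L K] [FiniteDimensional L K]
    [Algebra A K] [IsScalarTower A L K]
    (hd : 3 ≤ Module.finrank L K)
    (α β : K) (hαint : IsIntegral A α)
    (hα : Algebra.adjoin L {α} = ⊤)
    (hO : β ∈ Algebra.adjoin A {α}) (u a : L)
    (h : β = algebraMap L K u * α + algebraMap L K a) :
    (∃ u' : A, algebraMap A L u' = u) ∧ ∃ a' : A, algebraMap A L a' = a := by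
  have hint : IsIntegral L α := IsIntegral.of_finite L α
  have hdeg : (minpoly L α).natDegree = Module.finrank L K := by
    rw [← IntermediateField.adjoin.finrank hint]
    have : IntermediateField.adjoin L {α} = ⊤ := by
      apply IntermediateField.toSubalgebra_injective
      rw [IntermediateField.adjoin_simple_toSubalgebra_of_isAlgebraic hint.isAlgebraic, hα]
      rfl
    rw [this, IntermediateField.finrank_top']
  have hm := minpoly.isIntegrallyClosed_eq_field_fractions' L hαint
  have hmon := minpoly.monic hαint
  rw [Algebra.adjoin_singleton_eq_range_aeval] at hO
  obtain ⟨p, hp⟩ := hO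
  have hq : aeval α (p %ₘ minpoly A α) = β := by
    rw [aeval_modByMonic_eq_self_of_root (minpoly.aeval A α)]
    exact hp
  set q := p %ₘ minpoly A α with hqdef
  have hz : q.map (algebraMap A L) - (C u * X + C a) = 0 := by
    by_contra hne
    have h1 := minpoly.degree_le_of_ne_zero L α hne (by simp [hq, h])
    have h2 : (q.map (algebraMap A L) - (C u * X + C a)).degree < (minpoly L α).degree := by
      refine (degree_sub_le _ _).trans_lt (max_lt ?_ ?_)
      · rw [hm, hmon.degree_map]
        exact degree_map_le.trans_lt (degree_modByMonic_lt _ hmon)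
      · refine degree_linear_le.trans_lt ?_
        rw [degree_eq_natDegree (minpoly.ne_zero hint), hdeg]
        exact_mod_cast (by omega : 1 < Module.finrank L K)
    exact absurd h1 (not_le.mpr h2)
  rw [sub_eq_zero] at hz
  refine ⟨⟨q.coeff 1, ?_⟩, ⟨q.coeff 0, ?_⟩⟩
  · rw [← coeff_map, hz]; simp
  · rw [← coeff_map, hz]; simp

/-- Let `A` be an integrally closed domain with quotient field `L` of characteristic 0,
finitely generated over ℤ, and `K` a finite extension of `L` of degree at least 3. Let
`α, β` be integral over `A` with `L(α) = L(β) = K` and `A[α] = A[β]`, and suppose `α`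
and `β` are `L`-equivalent. Then `α` and `β` are `A`-equivalent. -/
theorem LEquiv_to_AEquiv
    (A : Type*) [CommRing A] [IsDomain A] [IsIntegrallyClosed A] [Algebra.FiniteType ℤ A]
    (L : Type*) [Field L] [CharZero L] [Algebra A L] [IsFractionRing A L]
    (K : Type*) [Field K] [Algebra L K] [FiniteDimensional L K]
    [Algebra A K] [IsScalarTower A L K]
    (hd : 3 ≤ Module.finrank L K)
    (α β : K) (hαint : IsIntegral A α) (hβint : IsIntegral A β)
    (hα : Algebra.adjoin L {α} = ⊤) (hβ : Algebra.adjoin L {β} = ⊤)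
    (hO : Algebra.adjoin A {α} = Algebra.adjoin A {β})
    (hLeq : LEquiv L K α β) :
    AEquiv A K α β := by
  obtain ⟨u, a, hu, h⟩ := hLeq
  obtain ⟨⟨u', hu'⟩, a', ha'⟩ := coeffs_mem_aux A L K hd α β hαint hα
    (hO ▸ Algebra.self_mem_adjoin_singleton A β) u a h
  have hu0 : algebraMap L K u ≠ 0 := by simpa using hu
  obtain ⟨⟨v, hv⟩, -⟩ := coeffs_mem_aux A L K hd β α hβint hβ
    (hO ▸ Algebra.self_mem_adjoin_singleton A α) u⁻¹ (-(u⁻¹ * a)) (by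
      rw [h, map_neg, map_mul, map_inv₀]
      field_simp
      ring)
  have huv : u' * v = 1 := by
    apply IsFractionRing.injective A L
    rw [map_mul, hu', hv, map_one, mul_inv_cancel₀ hu]
  refine ⟨⟨u', v, huv, by rw [mul_comm, huv]⟩, a', ?_⟩
  rw [h, IsScalarTower.algebraMap_apply A L K, IsScalarTower.algebraMap_apply A L K a', ha']
  simp [hu']
end

section
/- Let A be an integrally closed domain with quotient field L of characteristic 0 which is finitely generated over ℤ as a ℤ-algebra, and K a finite extension of L of degree at least 3. Let α, β ∈ A_K (the integral closure of A in K) satisfy L(α) = L(β) = K and A[α] = A[β], and suppose there is a matrix (a1 a2; a3 a4) ∈ GL(2, L) with β = (a1·α + a2)/(a3·α + a4), a3 ≠ 0, a1, a2, a3, a4 ∈ A, and the ideal of A generated by a1, a2, a3, a4 equal to the unit ideal. Then (a1 a2; a3 a4) ∈ GL(2, A), i.e., a1·a4 − a2·a3 is a unit of A. -/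
open Polynomial in
/-- Over a field: a rank one homography relation forces `y` to have degree at most two. -/
lemma rank_one_quadratic {k R : Type*} [Field k] [CommRing R] [Algebra k R] (x y : R)
    (t1 t2 t3 t4 : k) (h : k[X]) (hy : y = aeval x h)
    (hrel : y * (algebraMap k R t3 * x + algebraMap k R t4)
      = algebraMap k R t1 * x + algebraMap k R t2)
    (hdet : t1 * t4 - t2 * t3 = 0)
    (hne : ¬ (t1 = 0 ∧ t2 = 0 ∧ t3 = 0 ∧ t4 = 0)) :
    ∃ q : k[X], q ≠ 0 ∧ q.natDegree ≤ 2 ∧ aeval y q = 0 := by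
  obtain ⟨s, t, u, v, h1, h2, h3, h4⟩ : ∃ s t u v : k, t1 = s * u ∧ t2 = s * v ∧
      t3 = t * u ∧ t4 = t * v := by
    by_cases h3 : t3 = 0
    · by_cases h4 : t4 = 0
      · exact ⟨1, 0, t1, t2, by simp, by simp, by simp [h3], by simp [h4]⟩
      · have h1 : t1 = 0 := by
          subst h3
          simpa [h4] using hdet
        exact ⟨t2 / t4, 1, 0, t4, by simp [h1], by field_simp, by simp [h3], by simp⟩
    · exact ⟨t1 / t3, 1, t3, t4, by field_simp, by field_simp; linear_combination -hdet,
        by simp, by simp⟩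
  have hst : ¬ (s = 0 ∧ t = 0) := by
    rintro ⟨rfl, rfl⟩
    simp_all
  have huv : ¬ (u = 0 ∧ v = 0) := by
    rintro ⟨rfl, rfl⟩
    simp_all
  have hz : (algebraMap k R t * y - algebraMap k R s) *
      (algebraMap k R u * x + algebraMap k R v) = 0 := by
    subst h1 h2 h3 h4
    simp only [map_mul] at hrel
    linear_combination hrel
  have hlin : (C t * X - C s : k[X]) ≠ 0 := by
    intro h0
    apply hst
    have e0 := congrArg (fun p => coeff p 0) h0
    have e1 := congrArg (fun p => coeff p 1) h0
    simp [coeff_C] at e0 e1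
    exact ⟨e0, e1⟩
  have hlin1 : (C t * X - C s : k[X]).natDegree ≤ 1 := by compute_degree
  by_cases hu : u = 0
  · have hv : v ≠ 0 := fun hv => huv ⟨hu, hv⟩
    refine ⟨C t * X - C s, hlin, by omega, ?_⟩
    have hv' : algebraMap k R v * algebraMap k R v⁻¹ = 1 := by
      rw [← map_mul, mul_inv_cancel₀ hv, map_one]
    subst hu
    simp only [map_zero, zero_mul, zero_add] at hz
    simp only [map_sub, map_mul, aeval_C, aeval_X]
    linear_combination algebraMap k R v⁻¹ * hz
      - (algebraMap k R t * y - algebraMap k R s) * hv'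
  · set r : k := -v / u with hr
    refine ⟨(C t * X - C s) * (X - C (h.eval r)), mul_ne_zero hlin (X_sub_C_ne_zero _), ?_, ?_⟩
    · refine natDegree_mul_le.trans ?_
      rw [natDegree_X_sub_C]
      omega
    · obtain ⟨g, hg⟩ := X_sub_C_dvd_sub_C_eval (a := r) (p := h)
      have hg' := congrArg (aeval x) hg
      simp only [map_sub, map_mul, aeval_C, aeval_X, ← hy] at hg'
      simp only [map_sub, map_mul, aeval_C, aeval_X]
      rw [hg']
      have hvr : algebraMap k R v = - (algebraMap k R u * algebraMap k R r) := by
        rw [← map_mul, ← map_neg]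
        congr 1
        rw [hr]
        field_simp
      have hu' : algebraMap k R u * algebraMap k R u⁻¹ = 1 := by
        rw [← map_mul, mul_inv_cancel₀ hu, map_one]
      rw [hvr] at hz
      linear_combination algebraMap k R u⁻¹ * aeval x g * hz
        - (algebraMap k R t * y - algebraMap k R s) * (x - algebraMap k R r) * aeval x g * hu'

/-- Let `A` be an integrally closed domain with quotient field `L` of characteristic 0,
finitely generated over ℤ, and `K` a finite extension of `L` of degree at least 3. Let
`α, β` be integral over `A` with `L(α) = L(β) = K` and `A[α] = A[β]`, and suppose there
is a matrix `(a1 a2; a3 a4) ∈ GL(2, L)` with `β = (a1·α + a2)/(a3·α + a4)`, `a3 ≠ 0`,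
`a1, a2, a3, a4 ∈ A` and `(a1, a2, a3, a4) = (1)`. Then `a1·a4 − a2·a3` is a unit
of `A`, i.e. the matrix lies in `GL(2, A)`. -/
theorem matrix_is_in_GL2A
    (A : Type*) [CommRing A] [IsDomain A] [IsIntegrallyClosed A] [Algebra.FiniteType ℤ A]
    (L : Type*) [Field L] [CharZero L] [Algebra A L] [IsFractionRing A L]
    (K : Type*) [Field K] [Algebra L K] [FiniteDimensional L K]
    [Algebra A K] [IsScalarTower A L K]
    (hd : 3 ≤ Module.finrank L K)
    (α β : K) (hαint : IsIntegral A α) (hβint : IsIntegral A β)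
    (hα : Algebra.adjoin L {α} = ⊤) (hβ : Algebra.adjoin L {β} = ⊤)
    (hO : Algebra.adjoin A {α} = Algebra.adjoin A {β})
    (a1 a2 a3 a4 : A)
    (hdet : a1 * a4 - a2 * a3 ≠ 0)
    (ha3 : a3 ≠ 0)
    (hβeq : β = (algebraMap A K a1 * α + algebraMap A K a2) /
                (algebraMap A K a3 * α + algebraMap A K a4))
    (hideal : Ideal.span {a1, a2, a3, a4} = (⊤ : Ideal A)) :
    IsUnit (a1 * a4 - a2 * a3) := by
  classical
  have hinj : Function.Injective (algebraMap A K) := by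
    rw [IsScalarTower.algebraMap_eq A L K]
    exact (algebraMap L K).injective.comp (IsFractionRing.injective A L)
  haveI : Module.IsTorsionFree A K :=
    Module.isTorsionFree_iff_algebraMap_injective.mpr hinj
  have hβL : IsIntegral L β := hβint.tower_top
  have hdegL : (minpoly L β).natDegree = Module.finrank L K := by
    have e : IntermediateField.adjoin L {β} = ⊤ := by
      rw [← IntermediateField.toSubalgebra_injective.eq_iff,
        IntermediateField.adjoin_simple_toSubalgebra_of_isAlgebraic hβL.isAlgebraic, hβ]
      rfl
    rw [← IntermediateField.adjoin.finrank hβL, e, IntermediateField.finrank_top']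
  set m := minpoly A β with hm
  have hmon : m.Monic := minpoly.monic hβint
  have hmdeg : 3 ≤ m.natDegree := by
    have := minpoly.isIntegrallyClosed_eq_field_fractions L K hβint
    rw [Algebra.algebraMap_self_apply] at this
    rw [this, hmon.natDegree_map] at hdegL
    omega
  have hden : algebraMap A K a3 * α + algebraMap A K a4 ≠ 0 := by
    intro h0
    rw [h0, div_zero] at hβeq
    rw [hβeq, minpoly.zero] at hdegL
    simp at hdegL
    omega
  rw [eq_div_iff hden] at hβeq
  obtain ⟨g, hg⟩ : ∃ g : Polynomial A, Polynomial.aeval β g = α := by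
    have : α ∈ Algebra.adjoin A {β} := hO ▸ Algebra.self_mem_adjoin_singleton A α
    rwa [Algebra.adjoin_singleton_eq_range_aeval] at this
  obtain ⟨h, hh⟩ : ∃ h : Polynomial A, Polynomial.aeval α h = β := by
    have : β ∈ Algebra.adjoin A {α} := hO ▸ Algebra.self_mem_adjoin_singleton A β
    rwa [Algebra.adjoin_singleton_eq_range_aeval] at this
  have d1 : m ∣ Polynomial.X * (Polynomial.C a3 * g + Polynomial.C a4)
      - (Polynomial.C a1 * g + Polynomial.C a2) := by
    apply minpoly.isIntegrallyClosed_dvd hβint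
    simp [hg, hβeq]
  have d2 : m ∣ Polynomial.X - h.comp g := by
    apply minpoly.isIntegrallyClosed_dvd hβint
    simp [Polynomial.aeval_comp, hg, hh]
  by_contra hunit
  obtain ⟨p, hp, hmem⟩ := exists_max_ideal_of_mem_nonunits hunit
  letI : Field (A ⧸ p) := Ideal.Quotient.field p
  set π := Ideal.Quotient.mk p with hπ
  set n := m.map π with hn
  have hnmon : n.Monic := hmon.map π
  have e1 := (AdjoinRoot.mk_eq_zero (f := n)).mpr (Polynomial.map_dvd π d1)
  have e2 := (AdjoinRoot.mk_eq_zero (f := n)).mpr (Polynomial.map_dvd π d2)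
  obtain ⟨q, hq0, hq2, hq⟩ := rank_one_quadratic (k := A ⧸ p) (R := AdjoinRoot n)
    (AdjoinRoot.mk n (g.map π)) (AdjoinRoot.root n) (π a1) (π a2) (π a3) (π a4) (h.map π)
    (by
      rw [Polynomial.map_sub, map_sub, sub_eq_zero, Polynomial.map_X, AdjoinRoot.mk_X,
        Polynomial.map_comp] at e2
      rw [e2, ← AdjoinRoot.aeval_eq, Polynomial.aeval_comp, AdjoinRoot.aeval_eq])
    (by
      simp only [Polynomial.map_sub, Polynomial.map_mul, Polynomial.map_add, Polynomial.map_X,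
        Polynomial.map_C, map_sub, map_mul, map_add, AdjoinRoot.mk_X, AdjoinRoot.mk_C,
        sub_eq_zero] at e1
      exact e1)
    (by
      rw [← map_mul, ← map_mul, ← map_sub]
      exact Ideal.Quotient.eq_zero_iff_mem.mpr hmem)
    (by
      rintro ⟨h1, h2, h3, h4⟩
      rw [hπ, Ideal.Quotient.eq_zero_iff_mem] at h1 h2 h3 h4
      apply hp.ne_top
      rw [eq_top_iff, ← hideal, Ideal.span_le]
      rintro x (rfl | rfl | rfl | rfl) <;> assumption)
  rw [AdjoinRoot.aeval_eq, AdjoinRoot.mk_eq_zero] at hq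
  have := Polynomial.natDegree_le_of_dvd hq hq0
  rw [hn, hmon.natDegree_map] at this
  omega
end
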